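/- Let ℓ ≥ 1 be an integer and for each j ∈ {1,…,ℓ} consider the open interval I_j := ((j−1)π/ℓ, jπ/ℓ). Then f_ℓ is strictly decreasing on each I_j. -/

import Mathlib

/-!
The product-to-sum formulas turn the derivative of `sin ((ℓ + 1) p) / sin (ℓ p)` into
`(sin ((2 ℓ + 1) p) - (2 ℓ + 1) sin p) / (2 sin² (ℓ p))`. On `(0, π)` the numerator is negative,
because `|sin (n p)| < n |sin p|` for every integer `n ≥ 2` whenever `sin p ≠ 0`.
-/

open Real Set

theorem abs_sin_add_le (x y : ℝ) : |sin (x + y)| ≤ |sin x| * |cos y| + |sin y| :=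
  calc |sin (x + y)| ≤ |sin x * cos y| + |cos x * sin y| := by
        rw [sin_add]
        exact abs_add_le _ _
    _ = |sin x| * |cos y| + |cos x| * |sin y| := by rw [abs_mul, abs_mul]
    _ ≤ |sin x| * |cos y| + |sin y| := by
        gcongr
        exact mul_le_of_le_one_left (abs_nonneg _) (abs_cos_le_one x)

theorem abs_sin_nat_mul_le (n : ℕ) (x : ℝ) : |sin (n * x)| ≤ n * |sin x| := by
  induction n with
  | zero => simp
  | succ n ih =>
    calc |sin ((n + 1 : ℕ) * x)| = |sin (n * x + x)| := by rw [Nat.cast_succ, add_one_mul]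
      _ ≤ |sin (n * x)| * |cos x| + |sin x| := abs_sin_add_le _ _
      _ ≤ |sin (n * x)| + |sin x| := by
          gcongr
          exact mul_le_of_le_one_right (abs_nonneg _) (abs_cos_le_one x)
      _ ≤ n * |sin x| + |sin x| := by gcongr
      _ = (n + 1 : ℕ) * |sin x| := by rw [Nat.cast_succ, add_one_mul]

theorem abs_cos_lt_one_of_sin_ne_zero {x : ℝ} (hx : sin x ≠ 0) : |cos x| < 1 := by
  rw [← sq_lt_one_iff_abs_lt_one, cos_sq']
  exact sub_lt_self 1 (by positivity)

theorem abs_sin_nat_mul_lt {n : ℕ} (hn : 1 < n) {x : ℝ} (hx : sin x ≠ 0) :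
    |sin (n * x)| < n * |sin x| := by
  obtain ⟨m, rfl⟩ : ∃ m, n = m + 1 := ⟨n - 1, by lia⟩
  have hm : 0 < m := by lia
  calc |sin ((m + 1 : ℕ) * x)| = |sin (m * x + x)| := by rw [Nat.cast_succ, add_one_mul]
    _ ≤ |sin (m * x)| * |cos x| + |sin x| := abs_sin_add_le _ _
    _ ≤ m * |sin x| * |cos x| + |sin x| := by
        gcongr
        exact abs_sin_nat_mul_le m x
    _ < m * |sin x| + |sin x| := by
        gcongr ?_ + _
        exact mul_lt_of_lt_one_right (by positivity) (abs_cos_lt_one_of_sin_ne_zero hx)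
    _ = (m + 1 : ℕ) * |sin x| := by rw [Nat.cast_succ, add_one_mul]

theorem sin_ne_zero_of_mem_Ioo_int_mul_pi (k : ℤ) {x : ℝ} (hx : x ∈ Ioo (k * π) ((k + 1) * π)) :
    sin x ≠ 0 := by
  have hpos : 0 < sin (x - k * π) :=
    sin_pos_of_pos_of_lt_pi (by linarith [hx.1]) (by linarith [hx.2])
  rw [sin_sub_int_mul_pi] at hpos
  exact right_ne_zero_of_mul hpos.ne'

theorem hasDerivAt_sin_add_one_mul_div_sin_mul {a p : ℝ} (hp : sin (a * p) ≠ 0) :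
    HasDerivAt (fun p ↦ sin ((a + 1) * p) / sin (a * p))
      ((sin ((2 * a + 1) * p) - (2 * a + 1) * sin p) / (2 * sin (a * p) ^ 2)) p := by
  have hnum := ((hasDerivAt_id p).const_mul (a + 1)).sin
  have hden := ((hasDerivAt_id p).const_mul a).sin
  refine (hnum.div hden hp).congr_deriv ?_
  have hsum : sin ((2 * a + 1) * p) =
      sin ((a + 1) * p) * cos (a * p) + cos ((a + 1) * p) * sin (a * p) := by
    rw [← sin_add]
    ring_nf
  have hdiff : sin p = sin ((a + 1) * p) * cos (a * p) - cos ((a + 1) * p) * sin (a * p) := by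
    rw [← sin_sub]
    ring_nf
  rw [hsum, hdiff]
  simp only [id_eq]
  field_simp
  ring

theorem strictAntiOn_sin_add_one_mul_div_sin_mul {n : ℕ} {s : Set ℝ} (hs : Convex ℝ s)
    (hpos : ∀ p ∈ s, 0 < sin p) (hne : ∀ p ∈ s, sin (n * p) ≠ 0) :
    StrictAntiOn (fun p : ℝ ↦ sin ((n + 1) * p) / sin (n * p)) s := by
  have hderiv p (hp : p ∈ s) := hasDerivAt_sin_add_one_mul_div_sin_mul (hne p hp)
  refine strictAntiOn_of_hasDerivWithinAt_neg hs
    (fun p hp ↦ (hderiv p hp).continuousAt.continuousWithinAt)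
    (fun p hp ↦ (hderiv p (interior_subset hp)).hasDerivWithinAt) fun p hp ↦ ?_
  replace hp := interior_subset hp
  have hsin := hne p hp
  have hn : n ≠ 0 := by
    rintro rfl
    simp at hsin
  have hlt : sin ((2 * n + 1) * p) < (2 * n + 1) * sin p := by
    have hmul := abs_sin_nat_mul_lt (n := 2 * n + 1) (by lia) (hpos p hp).ne'
    rw [abs_of_pos (hpos p hp)] at hmul
    exact_mod_cast (le_abs_self _).trans_lt hmul
  exact div_neg_of_neg_of_pos (sub_neg.2 hlt) (by positivity)

theorem quasiF_strictAntiOn (ℓ : ℕ) (hℓ : 1 ≤ ℓ) (j : ℕ) (hj1 : 1 ≤ j) (hj2 : j ≤ ℓ) :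
    StrictAntiOn (fun p : ℝ => Real.sin ((ℓ + 1) * p) / Real.sin (ℓ * p))
      (Set.Ioo (((j : ℝ) - 1) * Real.pi / ℓ) ((j : ℝ) * Real.pi / ℓ)) := by
  have hℓ_pos : (0 : ℝ) < ℓ := by exact_mod_cast hℓ
  have hj_one : (1 : ℝ) ≤ j := by exact_mod_cast hj1
  have hj_le : (j : ℝ) ≤ ℓ := by exact_mod_cast hj2
  refine strictAntiOn_sin_add_one_mul_div_sin_mul (convex_Ioo _ _) ?_ ?_
  · rintro p ⟨hleft, hright⟩
    refine sin_pos_of_pos_of_lt_pi (lt_of_le_of_lt ?_ hleft) (hright.trans_le ?_)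
    · have := sub_nonneg.2 hj_one
      positivity
    · rw [div_le_iff₀' hℓ_pos]
      gcongr
  · rintro p ⟨hleft, hright⟩
    rw [div_lt_iff₀' hℓ_pos] at hleft
    rw [lt_div_iff₀' hℓ_pos] at hright
    exact sin_ne_zero_of_mem_Ioo_int_mul_pi (j - 1) (by simpa using ⟨hleft, hright⟩)
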